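/- Let ρ > 0 and 0 ≤ α < N. Let f : C_Ω^ρ → [0, ∞) be measurable and suppose there exist a subdomain Ω₀ of Ω with closure(Ω₀) ⊆ Ω, and constants c, β > 0 such that f(x) ≥ c·|x|^{−β} for all x ∈ C_{Ω₀}^ρ. If N < α + β, then there exists a constant C > 0 such that ∫_{C_Ω^ρ} f(y)|x−y|^{−α} dy ≥ C·|x|^{N−α−β} for all x ∈ C_Ω^{2ρ}. -/

import Mathlib

open MeasureTheory Real Set
open scoped ENNReal NNReal

noncomputable section

/-- Euclidean space `ℝ^N`. -/
abbrev Euc (N : ℕ) := EuclideanSpace ℝ (Fin N)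

/-- The Euclidean Laplacian `Δu(x) = ∑ ∂²u/∂xᵢ²(x)`, the trace of the Hessian. -/
def lap (N : ℕ) (u : Euc N → ℝ) (x : Euc N) : ℝ :=
  ∑ i : Fin N,
    iteratedFDeriv ℝ 2 u x ![EuclideanSpace.single i 1, EuclideanSpace.single i 1]

/-- The open cone `C_Ω^ρ = {x : |x| > ρ, x/|x| ∈ Ω}`. -/
def coneGT (N : ℕ) (ρ : ℝ) (Ω : Set (Euc N)) : Set (Euc N) :=
  {x | ρ < ‖x‖ ∧ ‖x‖⁻¹ • x ∈ Ω}

/-- The full open cone `C_Ω = {x ≠ 0 : x/|x| ∈ Ω}`. -/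
def cone (N : ℕ) (Ω : Set (Euc N)) : Set (Euc N) :=
  {x | x ≠ 0 ∧ ‖x‖⁻¹ • x ∈ Ω}

/-- `Ω` is a nonempty, connected, relatively open subset of the unit sphere `S^{N-1}`. -/
def IsConeDomain (N : ℕ) (Ω : Set (Euc N)) : Prop :=
  Ω ⊆ Metric.sphere (0 : Euc N) 1 ∧ IsConnected Ω ∧
    IsOpen {ω : Metric.sphere (0 : Euc N) 1 | (ω : Euc N) ∈ Ω}

/-- The convolution `(|x|^{-α} * f)(x) = ∫_{C_Ω^ρ} f(y)|x-y|^{-α} dy`, valued in `[0,∞]`. -/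
def rieszConv (N : ℕ) (α ρ : ℝ) (Ω : Set (Euc N)) (f : Euc N → ℝ) (x : Euc N) : ℝ≥0∞ :=
  ∫⁻ y in coneGT N ρ Ω, ENNReal.ofReal (f y * ‖x - y‖ ^ (-α))

/-- Dirichlet eigenpair hypothesis for `(Ω, λ₁, φ)`: `φ` is continuous on the closure of `Ω`,
positive on `Ω`, vanishing on the relative boundary, with maximum `1`, and its 0-homogeneous
extension `Φ(x) = φ(x/|x|)` is `C²` on the open cone and satisfies `ΔΦ = -λ₁|x|⁻²Φ`. -/
structure DirichletEigenpair (N : ℕ) (Ω : Set (Euc N)) (lam1 : ℝ) (φ : Euc N → ℝ) : Prop where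
  contOn : ContinuousOn φ (closure Ω)
  pos : ∀ ω ∈ Ω, 0 < φ ω
  bdryZero : ∀ ω ∈ closure Ω \ Ω, φ ω = 0
  le_one : ∀ ω ∈ closure Ω, φ ω ≤ 1
  max_one : ∃ ω ∈ closure Ω, φ ω = 1
  smoothExt : ContDiffOn ℝ 2 (fun x => φ (‖x‖⁻¹ • x)) (cone N Ω)
  eigen : ∀ x ∈ cone N Ω,
    lap N (fun y => φ (‖y‖⁻¹ • y)) x = -lam1 * ‖x‖ ^ (-(2:ℝ)) * φ (‖x‖⁻¹ • x)

/-- The Hardy constant `C_{H,Ω} = λ₁ + ((N-2)/2)²`. -/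
def CHconst (N : ℕ) (lam1 : ℝ) : ℝ := lam1 + (((N : ℝ) - 2) / 2) ^ 2

/-- The smaller root `γ_*` of `γ(γ + N - 2) = λ₁ - μ`. -/
def gammaStar (N : ℕ) (lam1 μ : ℝ) : ℝ :=
  (-((N : ℝ) - 2) - Real.sqrt (((N : ℝ) - 2) ^ 2 + 4 * (lam1 - μ))) / 2

/-- A positive (classical) solution of `(E) : -Δu - μ|x|⁻²u ≥ (|x|^{-α} * uᵖ) u^q` in `C_Ω^ρ`. -/
def IsPosSolE (N : ℕ) (ρ μ α p q : ℝ) (Ω : Set (Euc N)) (u : Euc N → ℝ) : Prop :=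
  ContDiffOn ℝ 2 u (coneGT N ρ Ω) ∧
  ContinuousOn u (closure (coneGT N ρ Ω)) ∧
  (∀ x ∈ coneGT N ρ Ω, 0 < u x) ∧
  (∀ x ∈ coneGT N ρ Ω, rieszConv N α ρ Ω (fun y => u y ^ p) x < ⊤) ∧
  (∀ x ∈ coneGT N ρ Ω,
    (rieszConv N α ρ Ω (fun y => u y ^ p) x).toReal * u x ^ q ≤
      -lap N u x - μ * ‖x‖ ^ (-(2:ℝ)) * u x)

/-- A positive solution of `(Z) : -Δu - μ|x|⁻²u ≥ (∫_{C_Ω^ρ} uᵖ) u^q` in `C_Ω^ρ`. -/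
def IsPosSolZ (N : ℕ) (ρ μ p q : ℝ) (Ω : Set (Euc N)) (u : Euc N → ℝ) : Prop :=
  ContDiffOn ℝ 2 u (coneGT N ρ Ω) ∧
  ContinuousOn u (closure (coneGT N ρ Ω)) ∧
  (∀ x ∈ coneGT N ρ Ω, 0 < u x) ∧
  (∫⁻ y in coneGT N ρ Ω, ENNReal.ofReal (u y ^ p)) < ⊤ ∧
  (∀ x ∈ coneGT N ρ Ω,
    (∫⁻ y in coneGT N ρ Ω, ENNReal.ofReal (u y ^ p)).toReal * u x ^ q ≤
      -lap N u x - μ * ‖x‖ ^ (-(2:ℝ)) * u x)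

/-- A positive solution `(u, v)` of the system `(S)` in `C_Ω^ρ`. -/
def IsPosSolS (N : ℕ) (ρ μ α p q s : ℝ) (Ω : Set (Euc N)) (u v : Euc N → ℝ) : Prop :=
  ContDiffOn ℝ 2 u (coneGT N ρ Ω) ∧ ContinuousOn u (closure (coneGT N ρ Ω)) ∧
  ContDiffOn ℝ 2 v (coneGT N ρ Ω) ∧ ContinuousOn v (closure (coneGT N ρ Ω)) ∧
  (∀ x ∈ coneGT N ρ Ω, 0 < u x) ∧ (∀ x ∈ coneGT N ρ Ω, 0 < v x) ∧
  (∀ x ∈ coneGT N ρ Ω, rieszConv N α ρ Ω (fun y => v y ^ p) x < ⊤) ∧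
  (∀ x ∈ coneGT N ρ Ω,
    (rieszConv N α ρ Ω (fun y => v y ^ p) x).toReal * v x ^ q ≤
      -lap N u x - μ * ‖x‖ ^ (-(2:ℝ)) * u x) ∧
  (∀ x ∈ coneGT N ρ Ω, u x ^ s ≤ -lap N v x - μ * ‖x‖ ^ (-(2:ℝ)) * v x)

/-!
Instead of integrating over the whole cone, integrate over the part of the cone over `Ω₀` lying in
the shell `2‖x‖ < ‖y‖ < 3‖x‖`. There `‖y‖` and `‖x - y‖` are both comparable to `‖x‖`, so the
integrand is at least a constant times `‖x‖ ^ (-α - β)` whatever the signs of `α` and `β`, while by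
homogeneity the volume of this piece is a positive constant times `‖x‖ ^ N`.
-/

section

open Metric Module
open scoped Pointwise

theorem ofReal_mul_measure_le_setLIntegral_mul_ofReal {X : Type*} [MeasurableSpace X]
    {μ : Measure X} {A : Set X} (hA : MeasurableSet A) {f : X → ℝ≥0∞} {g k : X → ℝ} {K : ℝ}
    (hf : ∀ y ∈ A, ENNReal.ofReal (g y) ≤ f y) (hk : ∀ y ∈ A, 0 ≤ k y)
    (hK : ∀ y ∈ A, K ≤ g y * k y) :
    ENNReal.ofReal K * μ A ≤ ∫⁻ y in A, f y * ENNReal.ofReal (k y) ∂μ := by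
  have hbound (y : X) (hy : y ∈ A) : ENNReal.ofReal K ≤ f y * ENNReal.ofReal (k y) :=
    calc ENNReal.ofReal K ≤ ENNReal.ofReal (g y * k y) := ENNReal.ofReal_le_ofReal (hK y hy)
      _ = ENNReal.ofReal (g y) * ENNReal.ofReal (k y) := ENNReal.ofReal_mul' (hk y hy)
      _ ≤ f y * ENNReal.ofReal (k y) := by gcongr; exact hf y hy
  calc ENNReal.ofReal K * μ A ≤ (⨅ y ∈ A, f y * ENNReal.ofReal (k y)) * μ A := by
        gcongr; exact le_iInf₂ hbound
    _ ≤ ∫⁻ y in A, f y * ENNReal.ofReal (k y) ∂μ := iInf_mul_le_setLIntegral _ hA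

theorem min_rpow_mul_rpow_le_rpow {a b r t : ℝ} (ha : 0 < a) (hr : 0 < r)
    (hat : a * r ≤ t) (htb : t ≤ b * r) (s : ℝ) :
    min (a ^ s) (b ^ s) * r ^ s ≤ t ^ s := by
  have har : 0 < a * r := mul_pos ha hr
  have hb : 0 < b := pos_of_mul_pos_left (har.trans_le (hat.trans htb)) hr.le
  rcases le_total 0 s with hs | hs
  · calc min (a ^ s) (b ^ s) * r ^ s ≤ a ^ s * r ^ s := by gcongr; exact min_le_left _ _
      _ = (a * r) ^ s := (mul_rpow ha.le hr.le).symm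
      _ ≤ t ^ s := rpow_le_rpow har.le hat hs
  · calc min (a ^ s) (b ^ s) * r ^ s ≤ b ^ s * r ^ s := by gcongr; exact min_le_right _ _
      _ = (b * r) ^ s := (mul_rpow hb.le hr.le).symm
      _ ≤ t ^ s := rpow_le_rpow_of_nonpos (har.trans_le hat) htb hs

variable {E : Type*} [NormedAddCommGroup E]

theorem exists_pos_mul_norm_rpow_le_norm_rpow_mul_norm_sub_rpow (α β : ℝ) :
    ∃ K > 0, ∀ x y : E, x ≠ 0 → ‖x‖ * 2 ≤ ‖y‖ → ‖y‖ ≤ ‖x‖ * 3 →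
      K * ‖x‖ ^ (-α - β) ≤ ‖y‖ ^ (-β) * ‖x - y‖ ^ (-α) := by
  refine ⟨min (2 ^ (-β)) (3 ^ (-β)) * min (1 ^ (-α)) (4 ^ (-α)), by positivity,
    fun x y hx hxy hyx => ?_⟩
  have hr : 0 < ‖x‖ := norm_pos_iff.mpr hx
  have hy : min (2 ^ (-β)) (3 ^ (-β)) * ‖x‖ ^ (-β) ≤ ‖y‖ ^ (-β) :=
    min_rpow_mul_rpow_le_rpow two_pos hr (by linarith) (by linarith) _
  have hsub : min (1 ^ (-α)) (4 ^ (-α)) * ‖x‖ ^ (-α) ≤ ‖x - y‖ ^ (-α) :=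
    min_rpow_mul_rpow_le_rpow one_pos hr
      (by linarith [norm_sub_norm_le y x, norm_sub_rev x y]) (by linarith [norm_sub_le x y]) _
  calc min (2 ^ (-β)) (3 ^ (-β)) * min (1 ^ (-α)) (4 ^ (-α)) * ‖x‖ ^ (-α - β)
      = (min (2 ^ (-β)) (3 ^ (-β)) * ‖x‖ ^ (-β)) * (min (1 ^ (-α)) (4 ^ (-α)) * ‖x‖ ^ (-α)) := by
        rw [sub_eq_add_neg, rpow_add hr]; ring
    _ ≤ ‖y‖ ^ (-β) * ‖x - y‖ ^ (-α) := by gcongr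

variable [NormedSpace ℝ E]

/-- The truncated cone `{y : |y| > ρ, y/|y| ∈ Ω}` in an arbitrary real normed space, extending
`coneGT` beyond Euclidean space. Only the trace of `Ω` on the unit sphere matters when `0 ≤ ρ`. -/
def truncatedCone (ρ : ℝ) (Ω : Set E) : Set E := {y | ρ < ‖y‖ ∧ ‖y‖⁻¹ • y ∈ Ω}

theorem coneGT_eq_truncatedCone (N : ℕ) (ρ : ℝ) (Ω : Set (Euc N)) :
    coneGT N ρ Ω = truncatedCone ρ Ω := rfl

theorem truncatedCone_subset_truncatedCone {ρ ρ' : ℝ} {Ω Ω' : Set E} (hρ : ρ ≤ ρ')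
    (hΩ : Ω' ⊆ Ω) : truncatedCone ρ' Ω' ⊆ truncatedCone ρ Ω :=
  fun _ hy => ⟨hρ.trans_lt hy.1, hΩ hy.2⟩

theorem isOpen_truncatedCone {ρ : ℝ} (hρ : 0 ≤ ρ) {Ω : Set E}
    (hΩ : IsOpen ((↑) ⁻¹' Ω : Set (sphere (0 : E) 1))) : IsOpen (truncatedCone ρ Ω) := by
  obtain ⟨U, hU, hUΩ⟩ := isOpen_induced_iff.mp hΩ
  have hpos {y : E} (hy : ρ < ‖y‖) : ‖y‖ ≠ 0 := (hρ.trans_lt hy).ne'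
  have hmem_iff {y : E} (hy : ρ < ‖y‖) : ‖y‖⁻¹ • y ∈ U ↔ ‖y‖⁻¹ • y ∈ Ω :=
    have hunit : ‖y‖⁻¹ • y ∈ sphere (0 : E) 1 := by
      rw [mem_sphere_zero_iff_norm, norm_smul, norm_inv, norm_norm, inv_mul_cancel₀ (hpos hy)]
    Set.ext_iff.mp hUΩ ⟨_, hunit⟩
  have hcont : ContinuousOn (fun y : E => ‖y‖⁻¹ • y) {y | ρ < ‖y‖} :=
    (continuousOn_id.norm.inv₀ fun _ hy => hpos hy).smul continuousOn_id
  have heq : truncatedCone ρ Ω = {y | ρ < ‖y‖} ∩ (fun y : E => ‖y‖⁻¹ • y) ⁻¹' U :=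
    Set.ext fun _ => and_congr_right fun hy => (hmem_iff hy).symm
  rw [heq]
  exact hcont.isOpen_inter_preimage (isOpen_lt continuous_const continuous_norm) hU

theorem smul_mem_truncatedCone {ρ t : ℝ} {Ω : Set E} {ω : E} (hρ : 0 ≤ ρ) (ht : ρ < t)
    (hωΩ : ω ∈ Ω) (hω : ‖ω‖ = 1) : t • ω ∈ truncatedCone ρ Ω := by
  have ht0 : 0 < t := hρ.trans_lt ht
  have hnorm : ‖t • ω‖ = t := by rw [norm_smul_of_nonneg ht0.le, hω, mul_one]
  exact ⟨by rwa [hnorm], by rwa [hnorm, inv_smul_smul₀ ht0.ne']⟩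

theorem smul_truncatedCone {r : ℝ} (hr : 0 < r) (ρ : ℝ) (Ω : Set E) :
    r • truncatedCone ρ Ω = truncatedCone (r * ρ) Ω := by
  ext y
  have hnorm : ‖r⁻¹ • y‖ = r⁻¹ * ‖y‖ := norm_smul_of_nonneg (inv_nonneg.mpr hr.le) y
  have hdir : ‖r⁻¹ • y‖⁻¹ • r⁻¹ • y = ‖y‖⁻¹ • y := by
    rw [hnorm, smul_smul, mul_inv, inv_inv, mul_right_comm, mul_inv_cancel₀ hr.ne', one_mul]
  rw [mem_smul_set_iff_inv_smul_mem₀ hr.ne']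
  change ρ < ‖r⁻¹ • y‖ ∧ ‖r⁻¹ • y‖⁻¹ • r⁻¹ • y ∈ Ω ↔ r * ρ < ‖y‖ ∧ ‖y‖⁻¹ • y ∈ Ω
  rw [hdir, hnorm, lt_inv_mul_iff₀ hr]

variable [MeasurableSpace E] (μ : Measure E)

theorem measure_truncatedCone_inter_ball_pos [μ.IsOpenPosMeasure] {a b : ℝ} (ha : 0 ≤ a)
    (hab : a < b) {Ω : Set E} (hΩ : IsOpen ((↑) ⁻¹' Ω : Set (sphere (0 : E) 1)))
    (hne : (Ω ∩ sphere 0 1).Nonempty) : 0 < μ (truncatedCone a Ω ∩ ball 0 b) := by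
  obtain ⟨ω, hωΩ, hω⟩ := hne
  rw [mem_sphere_zero_iff_norm] at hω
  obtain ⟨t, hat, htb⟩ := exists_between hab
  have hball : t • ω ∈ ball (0 : E) b := by
    rwa [mem_ball_zero_iff, norm_smul_of_nonneg (ha.trans hat.le), hω, mul_one]
  exact ((isOpen_truncatedCone ha hΩ).inter isOpen_ball).measure_pos μ
    ⟨t • ω, smul_mem_truncatedCone ha hat hωΩ hω, hball⟩

variable [BorelSpace E] [FiniteDimensional ℝ E] [μ.IsAddHaarMeasure]

theorem measure_truncatedCone_inter_ball_mul {r : ℝ} (hr : 0 < r) (a b : ℝ) (Ω : Set E) :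
    μ (truncatedCone (r * a) Ω ∩ ball 0 (r * b)) =
      ENNReal.ofReal (r ^ finrank ℝ E) * μ (truncatedCone a Ω ∩ ball 0 b) := by
  have hball : r • ball (0 : E) b = ball 0 (r * b) := by
    rw [_root_.smul_ball hr.ne', smul_zero, Real.norm_of_nonneg hr.le]
  rw [← smul_truncatedCone hr, ← hball, ← smul_set_inter₀ hr.ne',
    Measure.addHaar_smul_of_nonneg μ hr.le]

theorem conv_lower_bound_power_general {Ω Ω₀ : Set E}
    (hΩ₀ : IsOpen ((↑) ⁻¹' Ω₀ : Set (sphere (0 : E) 1))) (hne : (Ω₀ ∩ sphere 0 1).Nonempty)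
    (hsub : Ω₀ ⊆ Ω) {ρ c : ℝ} (hc : 0 < c) (α β : ℝ) {f : E → ℝ≥0∞}
    (hlow : ∀ y ∈ truncatedCone ρ Ω₀, ENNReal.ofReal (c * ‖y‖ ^ (-β)) ≤ f y) :
    ∃ C > 0, ∀ x ≠ 0, ρ ≤ ‖x‖ →
      ENNReal.ofReal (C * ‖x‖ ^ ((finrank ℝ E : ℝ) - α - β)) ≤
        ∫⁻ y in truncatedCone ρ Ω, f y * ENNReal.ofReal (‖x - y‖ ^ (-α)) ∂μ := by
  obtain ⟨K, hK, hK_le⟩ := exists_pos_mul_norm_rpow_le_norm_rpow_mul_norm_sub_rpow (E := E) α β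
  let m : ℝ≥0∞ := μ (truncatedCone 2 Ω₀ ∩ ball 0 3)
  have hm_top : m ≠ ⊤ := measure_ne_top_of_subset inter_subset_right measure_ball_lt_top.ne
  have hm_pos : 0 < m :=
    measure_truncatedCone_inter_ball_pos μ zero_le_two (by norm_num) hΩ₀ hne
  refine ⟨c * K * m.toReal, mul_pos (mul_pos hc hK) (ENNReal.toReal_pos hm_pos.ne' hm_top),
    fun x hx hρx => ?_⟩
  have hr : 0 < ‖x‖ := norm_pos_iff.mpr hx
  have hρ2 : ρ ≤ ‖x‖ * 2 := by linarith
  let A : Set E := truncatedCone (‖x‖ * 2) Ω₀ ∩ ball 0 (‖x‖ * 3)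
  have hA_meas : MeasurableSet A :=
    ((isOpen_truncatedCone (by positivity) hΩ₀).inter isOpen_ball).measurableSet
  have hA_sub : A ⊆ truncatedCone ρ Ω₀ :=
    inter_subset_left.trans (truncatedCone_subset_truncatedCone hρ2 subset_rfl)
  have hA_vol : μ A = ENNReal.ofReal (‖x‖ ^ finrank ℝ E * m.toReal) := by
    rw [measure_truncatedCone_inter_ball_mul μ hr, ENNReal.ofReal_mul (by positivity),
      ENNReal.ofReal_toReal hm_top]
  have hbound (y : E) (hy : y ∈ A) :
      c * K * ‖x‖ ^ (-α - β) ≤ c * ‖y‖ ^ (-β) * ‖x - y‖ ^ (-α) := by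
    simpa only [mul_assoc] using mul_le_mul_of_nonneg_left
      (hK_le x y hx hy.1.1.le (mem_ball_zero_iff.mp hy.2).le) hc.le
  calc ENNReal.ofReal (c * K * m.toReal * ‖x‖ ^ ((finrank ℝ E : ℝ) - α - β))
      = ENNReal.ofReal (c * K * ‖x‖ ^ (-α - β)) * μ A := by
        rw [hA_vol, ← ENNReal.ofReal_mul (by positivity), ← rpow_natCast,
          show (finrank ℝ E : ℝ) - α - β = finrank ℝ E + (-α - β) by ring, rpow_add hr]
        congr 1
        ring
    _ ≤ ∫⁻ y in A, f y * ENNReal.ofReal (‖x - y‖ ^ (-α)) ∂μ :=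
        ofReal_mul_measure_le_setLIntegral_mul_ofReal hA_meas (fun y hy => hlow y (hA_sub hy))
          (fun _ _ => by positivity) hbound
    _ ≤ ∫⁻ y in truncatedCone ρ Ω, f y * ENNReal.ofReal (‖x - y‖ ^ (-α)) ∂μ :=
        lintegral_mono_set (hA_sub.trans (truncatedCone_subset_truncatedCone le_rfl hsub))

end

/-- Lemma 2.2(ii), case `N < α + β`: if `f ≥ c|x|^{-β}` on a subcone and
`N < α + β`, then the convolution is `≥ C|x|^{N-α-β}` on `C_Ω^{2ρ}`. -/
theorem conv_lower_bound_power
    (N : ℕ) (hN : 2 ≤ N) (Ω : Set (Euc N)) (hΩ : IsConeDomain N Ω)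
    (ρ α : ℝ) (hρ : 0 < ρ) (hα : 0 ≤ α) (hαN : α < N)
    (f : Euc N → ℝ) (hmeas : Measurable f) (hf0 : ∀ y, 0 ≤ f y)
    (Ω₀ : Set (Euc N)) (hΩ₀ : IsConeDomain N Ω₀) (hsub : closure Ω₀ ⊆ Ω)
    (c β : ℝ) (hc : 0 < c) (hβ : 0 < β)
    (hlow : ∀ x ∈ coneGT N ρ Ω₀, c * ‖x‖ ^ (-β) ≤ f x)
    (hNab : (N : ℝ) < α + β) :
    ∃ C > 0, ∀ x ∈ coneGT N (2 * ρ) Ω,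
      ENNReal.ofReal (C * ‖x‖ ^ ((N : ℝ) - α - β)) ≤
        ∫⁻ y in coneGT N ρ Ω, ENNReal.ofReal (f y * ‖x - y‖ ^ (-α)) := by
  obtain ⟨ω, hω⟩ := hΩ₀.2.1.nonempty
  obtain ⟨C, hC, hbound⟩ := conv_lower_bound_power_general volume hΩ₀.2.2 ⟨ω, hω, hΩ₀.1 hω⟩
    (subset_closure.trans hsub) hc α β fun y hy => ENNReal.ofReal_le_ofReal (hlow y hy)
  refine ⟨C, hC, fun x hx => ?_⟩
  have hρx : ρ < ‖x‖ := by linarith [hx.1]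
  simpa only [coneGT_eq_truncatedCone, finrank_euclideanSpace_fin, ENNReal.ofReal_mul (hf0 _)] using
    hbound x (norm_pos_iff.mp (hρ.trans hρx)) hρx.le
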